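/- arXiv:1608.07825 — 3 statements merged into one kernel-verified Lean document; each statement's English description precedes it below -/
import Mathlib

section
/- Fix a real number d' > 0 and let δ = (r, c, s) ∈ ℝ³ with r > 0, c > 0, s > 0 and d'c² < rs. Then the set I_δ = { k(b, w) : b ∈ ℝ, w > 0, Z_{(b,w)}(δ) is real and Z_{(b,w)}(δ) ≤ 0 } is exactly the half-open line segment { (1−t)·Pr(δ) + t·pt_δ : 0 ≤ t < 1 }, where Pr(δ) = (c/s, r/s) and pt_δ = (r/(d'c), r²/(d'c²)) is the intersection point of the parabola y = d'x² with the line through the origin and Pr(δ). (Lemma 2.3 of the paper: the locus where the central charge of a root δ lies in ℝ_{≤0} is the segment between Pr(δ) and pt_δ.) -/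
/-- Lemma 2.3 of the paper: for a vector `δ = (r, c, s)` with `r, c, s > 0` and
`d'c² < rs`, the locus of points `k(b,w)` where the central charge `Z_{(b,w)}(δ)` lies in
`ℝ_{≤0}` is the half-open line segment between `Pr(δ) = (c/s, r/s)` and the point
`pt_δ = (r/(d'c), r²/(d'c²))` on the parabola `y = d'x²`. -/
theorem stmt2 (d' r c s : ℝ) (hd' : 0 < d') (hr : 0 < r) (hc : 0 < c) (hs : 0 < s)
    (hdisc : d' * c ^ 2 < r * s) :
    {q : ℝ × ℝ | ∃ b w : ℝ, 0 < w ∧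
        2 * d' * w * (c - r * b) = 0 ∧
        2 * d' * b * c - s - d' * r * (b ^ 2 - w ^ 2) ≤ 0 ∧
        q = (b / (d' * (b ^ 2 + w ^ 2)), 1 / (d' * (b ^ 2 + w ^ 2)))} =
    {q : ℝ × ℝ | ∃ t : ℝ, 0 ≤ t ∧ t < 1 ∧
        q = (1 - t) • ((c / s, r / s) : ℝ × ℝ) +
            t • ((r / (d' * c), r ^ 2 / (d' * c ^ 2)) : ℝ × ℝ)} := by
  obtain ⟨b, rfl⟩ : ∃ b, c = r * b := ⟨c / r, by field_simp⟩
  have hb : 0 < b := by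
    by_contra h
    nlinarith
  have hsb : d' * r * b ^ 2 < s := by
    have : r * (d' * r * b ^ 2) < r * s := by nlinarith
    exact lt_of_mul_lt_mul_left this hr.le
  obtain ⟨A, hA⟩ : ∃ A, A = r / s := ⟨_, rfl⟩
  obtain ⟨B, hB⟩ : ∃ B, B = 1 / (d' * b ^ 2) := ⟨_, rfl⟩
  have e1 : r * b / s = b * A := by rw [hA]; ring
  have e2 : r / (d' * (r * b)) = b * B := by rw [hB]; field_simp
  have e3 : r ^ 2 / (d' * (r * b) ^ 2) = B := by rw [hB]; field_simp
  have hA0 : 0 < A := by rw [hA]; positivity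
  have hAB : A < B := by
    rw [hA, hB, div_lt_div_iff₀ hs (by positivity)]
    nlinarith
  rw [e1, e2, e3, ← hA]
  ext q
  simp only [Set.mem_setOf_eq]
  constructor
  · rintro ⟨b', w, hw, h1, h2, rfl⟩
    have hbb : b' = b := by
      have h3 : 2 * d' * w * r ≠ 0 := by positivity
      have h4 : 2 * d' * w * r * (b - b') = 0 := by linarith
      rcases mul_eq_zero.mp h4 with h | h
      · exact absurd h h3
      · linarith
    subst hbb
    obtain ⟨y, hy⟩ : ∃ y, y = 1 / (d' * (b' ^ 2 + w ^ 2)) := ⟨_, rfl⟩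
    have hx : b' / (d' * (b' ^ 2 + w ^ 2)) = b' * y := by rw [hy]; ring
    have hAy : A ≤ y := by
      rw [hA, hy, div_le_div_iff₀ hs (by positivity)]
      nlinarith
    have hyB : y < B := by
      rw [hB, hy]
      apply one_div_lt_one_div_of_lt (by positivity)
      nlinarith [mul_pos hd' (pow_pos hw 2)]
    have hBA : 0 < B - A := by linarith
    rw [hx, ← hy]
    refine ⟨(y - A) / (B - A), div_nonneg (by linarith) hBA.le, ?_, ?_⟩
    · rw [div_lt_one hBA]; linarith
    · have key : (1 - (y - A) / (B - A)) * A + (y - A) / (B - A) * B = y := by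
        have := div_mul_cancel₀ (y - A) hBA.ne'
        linear_combination this
      ext
      · simp only [Prod.fst_add, Prod.smul_fst, smul_eq_mul]
        linear_combination -b' * key
      · simp only [Prod.snd_add, Prod.smul_snd, smul_eq_mul]
        exact key.symm
  · rintro ⟨t, ht0, ht1, rfl⟩
    obtain ⟨y, hy⟩ : ∃ y, y = (1 - t) * A + t * B := ⟨_, rfl⟩
    have hAy : A ≤ y := by nlinarith
    have hyB : y < B := by nlinarith
    have hy0 : 0 < y := by linarith
    have hpos : 0 < 1 / (d' * y) - b ^ 2 := by
      rw [hB, lt_div_iff₀ (by positivity)] at hyB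
      rw [sub_pos, lt_div_iff₀ (by positivity)]
      linarith
    have hN : d' * (b ^ 2 + √(1 / (d' * y) - b ^ 2) ^ 2) = 1 / y := by
      rw [Real.sq_sqrt hpos.le]
      field_simp
      ring
    refine ⟨b, √(1 / (d' * y) - b ^ 2), Real.sqrt_pos.mpr hpos, by ring, ?_, ?_⟩
    · have h5 : r * (1 / y) ≤ s := by
        rw [hA, div_le_iff₀ hs] at hAy
        rw [mul_one_div, div_le_iff₀ hy0]
        linarith
      rw [← hN] at h5
      linarith
    · rw [hN]
      ext
      · simp only [Prod.fst_add, Prod.smul_fst, smul_eq_mul]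
        rw [div_div_eq_mul_div, div_one, hy]; ring
      · simp only [Prod.snd_add, Prod.smul_snd, smul_eq_mul]
        rw [one_div_one_div, hy]
end

section
/- Fix a real number d' > 0, a real number b, and a real number w > 0. Let v = (r, c, s) and v' = (r', c', s') be vectors in ℝ³ with s ≠ 0 and s' ≠ 0. Then the complex numbers Z_{(b,w)}(v) and Z_{(b,w)}(v') are linearly dependent over ℝ (i.e. Im(Z_{(b,w)}(v) · conj(Z_{(b,w)}(v'))) = 0) if and only if the three points k(b, w), Pr(v) = (c/s, r/s), and Pr(v') = (c'/s', r'/s') in ℝ² are collinear. (Computational core of Lemma 2.6: two semistable objects have the same phase at σ_{(b,w)} exactly when k(b,w), Pr(v(E)), Pr(v(E')) are collinear; in particular walls of stability are line segments through the projection of the Mukai vector.) -/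
theorem collinear_det_aux (x1 y1 x2 y2 x3 y3 : ℝ) :
    Collinear ℝ ({(x1, y1), (x2, y2), (x3, y3)} : Set (ℝ × ℝ)) ↔
      (x2 - x1) * (y3 - y1) - (x3 - x1) * (y2 - y1) = 0 := by
  rw [collinear_iff_of_mem (p₀ := (x1, y1)) (by simp)]
  constructor
  · rintro ⟨⟨u, v⟩, h⟩
    obtain ⟨a, ha⟩ := h (x2, y2) (by simp)
    obtain ⟨e, he⟩ := h (x3, y3) (by simp)
    simp only [vadd_eq_add, Prod.smul_mk, smul_eq_mul, Prod.mk_add_mk, Prod.mk.injEq] at ha he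
    rw [ha.1, ha.2, he.1, he.2]
    ring
  · intro h
    by_cases hq : (x2 - x1) ^ 2 + (y2 - y1) ^ 2 = 0
    · have h1 : x2 = x1 := by nlinarith [sq_nonneg (x2 - x1), sq_nonneg (y2 - y1)]
      have h2 : y2 = y1 := by nlinarith [sq_nonneg (x2 - x1), sq_nonneg (y2 - y1)]
      subst h1 h2
      refine ⟨(x3 - x2, y3 - y2), ?_⟩
      intro p hp
      simp only [Set.mem_insert_iff, Set.mem_singleton_iff] at hp
      rcases hp with rfl | rfl | rfl
      · exact ⟨0, by simp⟩
      · exact ⟨0, by simp⟩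
      · exact ⟨1, by simp⟩
    · refine ⟨(x2 - x1, y2 - y1), ?_⟩
      intro p hp
      simp only [Set.mem_insert_iff, Set.mem_singleton_iff] at hp
      rcases hp with rfl | rfl | rfl
      · exact ⟨0, by simp⟩
      · exact ⟨1, by simp⟩
      · refine ⟨((x2 - x1) * (x3 - x1) + (y2 - y1) * (y3 - y1)) /
          ((x2 - x1) ^ 2 + (y2 - y1) ^ 2), ?_⟩
        simp only [vadd_eq_add, Prod.smul_mk, smul_eq_mul, Prod.mk_add_mk, Prod.mk.injEq]
        constructor
        · rw [← sub_eq_iff_eq_add, div_mul_eq_mul_div, eq_div_iff hq]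
          linear_combination (-(y2 - y1)) * h
        · rw [← sub_eq_iff_eq_add, div_mul_eq_mul_div, eq_div_iff hq]
          linear_combination (x2 - x1) * h

/-- Computational core of Lemma 2.6: the central charges `Z_{(b,w)}(v)` and
`Z_{(b,w)}(v')` of two vectors `v = (r,c,s)`, `v' = (r',c',s')` are linearly dependent
over `ℝ` (i.e. `Im(Z(v)·conj(Z(v'))) = 0`) if and only if the three points `k(b,w)`,
`Pr(v) = (c/s, r/s)` and `Pr(v') = (c'/s', r'/s')` are collinear. -/
theorem stmt5 (d' b w : ℝ) (hd' : 0 < d') (hw : 0 < w)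
    (r c s r' c' s' : ℝ) (hs : s ≠ 0) (hs' : s' ≠ 0) :
    ((((2 * d' * b * c - s - d' * r * (b ^ 2 - w ^ 2) : ℝ) : ℂ) +
        ((2 * d' * w * (c - r * b) : ℝ) : ℂ) * Complex.I) *
      (starRingEnd ℂ)
        (((2 * d' * b * c' - s' - d' * r' * (b ^ 2 - w ^ 2) : ℝ) : ℂ) +
          ((2 * d' * w * (c' - r' * b) : ℝ) : ℂ) * Complex.I)).im = 0 ↔
    Collinear ℝ
      ({(b / (d' * (b ^ 2 + w ^ 2)), 1 / (d' * (b ^ 2 + w ^ 2))),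
        (c / s, r / s), (c' / s', r' / s')} : Set (ℝ × ℝ)) := by
  rw [collinear_det_aux]
  have hN : b ^ 2 + w ^ 2 ≠ 0 := by positivity
  have hd : d' ≠ 0 := hd'.ne'
  have hK : 2 * d' * w * (s * s' * (d' * (b ^ 2 + w ^ 2))) ≠ 0 := by
    have := hw.ne'
    simp [*]
  refine Iff.trans ?_ (mul_eq_zero_iff_left hK)
  apply Eq.congr _ rfl
  simp only [map_add, map_mul, Complex.conj_ofReal, Complex.conj_I, Complex.mul_im,
    Complex.mul_re, Complex.add_re, Complex.add_im, Complex.neg_re, Complex.neg_im,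
    Complex.ofReal_re, Complex.ofReal_im, Complex.I_re, Complex.I_im]
  field_simp
  ring
end

section
/- Fix a real number d' > 0 and real numbers r, c, s, b with r ≠ 0. Define q(b) = −d'b² + d'b(2c − r)/r + d'c/r − 2d'c²/r² + s/r, and suppose q(b) > 0; set w = √(q(b)/d'). If moreover s ≠ 0 and s − 2d'c + d'r ≠ 0, then the three points k(b, w), (c/s, r/s), and ((c − r)/(s − 2d'c + d'r), r/(s − 2d'c + d'r)) in ℝ² are collinear. (Computational content of Lemma 3.1: if F has normalized Mukai vector (r, c, s), then F(−H) has normalized Mukai vector (r, c − r, s − 2d'c + d'r), and the stability condition σ_{(b,w_b)} with d'w_b² = q(b) lies on the line through Pr(F) and Pr(F(−H)), so that F and F(−H)[1] have the same phase there.) -/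
/-- Computational content of Lemma 3.1: with `w = √(q(b)/d')` where
`q(b) = −d'b² + d'b(2c − r)/r + d'c/r − 2d'c²/r² + s/r > 0`, the point `k(b,w)` lies on
the line through `Pr(F) = (c/s, r/s)` and
`Pr(F(−H)) = ((c−r)/(s−2d'c+d'r), r/(s−2d'c+d'r))`. -/
theorem stmt6 (d' r c s b : ℝ) (hd' : 0 < d') (hr : r ≠ 0)
    (hq : 0 < -d' * b ^ 2 + d' * b * (2 * c - r) / r + d' * c / r
            - 2 * d' * c ^ 2 / r ^ 2 + s / r)
    (w : ℝ)
    (hw : w = Real.sqrt ((-d' * b ^ 2 + d' * b * (2 * c - r) / r + d' * c / r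
            - 2 * d' * c ^ 2 / r ^ 2 + s / r) / d'))
    (hs : s ≠ 0) (hs' : s - 2 * d' * c + d' * r ≠ 0) :
    Collinear ℝ
      ({(b / (d' * (b ^ 2 + w ^ 2)), 1 / (d' * (b ^ 2 + w ^ 2))),
        (c / s, r / s),
        ((c - r) / (s - 2 * d' * c + d' * r), r / (s - 2 * d' * c + d' * r))} :
        Set (ℝ × ℝ)) := by
  have hqd := div_pos hq hd'
  have hw2 : w ^ 2 = (-d' * b ^ 2 + d' * b * (2 * c - r) / r + d' * c / r
            - 2 * d' * c ^ 2 / r ^ 2 + s / r) / d' := by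
    rw [hw, Real.sq_sqrt hqd.le]
  have hNpos : 0 < d' * (b ^ 2 + w ^ 2) := by
    rw [hw2]
    exact mul_pos hd' (add_pos_of_nonneg_of_pos (sq_nonneg b) hqd)
  have hN : d' * (b ^ 2 + w ^ 2) * r ^ 2
      = d' * b * (2 * c - r) * r + d' * c * r - 2 * d' * c ^ 2 + s * r := by
    rw [hw2]
    have := hd'.ne'
    field_simp
    ring
  generalize d' * (b ^ 2 + w ^ 2) = N at hNpos hN
  have hN0 := hNpos.ne'
  generalize hS : s - 2 * d' * c + d' * r = S at hs'
  rw [collinear_iff_of_mem (p₀ := (c / s, r / s)) (by simp)]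
  refine ⟨((c - r) / S - c / s, r / S - r / s), ?_⟩
  intro p hp
  simp only [Set.mem_insert_iff, Set.mem_singleton_iff] at hp
  rcases hp with rfl | rfl | rfl
  · refine ⟨(c - b * r) * S / (r ^ 2 * N), ?_⟩
    simp only [vadd_eq_add, Prod.smul_mk, Prod.mk_add_mk, smul_eq_mul, Prod.mk.injEq]
    constructor
    · field_simp
      subst hS
      linear_combination (-c) * hN
    · field_simp
      subst hS
      linear_combination (-1) * hN
  · exact ⟨0, by simp⟩
  · exact ⟨1, by simp⟩
end
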